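/- Let (X,d) be a metric space and let W ⊆ U be domains in X, with inner metrics d_W on W and d_U on U. Let a ∈ U and r > 0 be such that every point x ∈ U with d_U(a,x) < 3r belongs to W. Then for all y, z ∈ U with d_U(a,y) < r and d_U(a,z) < r, one has d_W(y,z) = d_U(y,z). -/

import Mathlib

open Set Metric MeasureTheory ENNReal

noncomputable section

/-- The length of the curve `γ : [0,1] → X`, defined as the supremum of sums
`∑ d(γ(t_i), γ(t_{i-1}))` over partitions `0 ≤ t₀ < … < t_k ≤ 1`. -/
def curveLength {X : Type*} [PseudoEMetricSpace X] (γ : ℝ → X) : ℝ≥0∞ :=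
  eVariationOn γ (Set.Icc 0 1)

/-- `γ` is a continuous curve in `Ω` from `x` to `y`. -/
def IsCurveIn {X : Type*} [PseudoEMetricSpace X] (Ω : Set X) (x y : X) (γ : ℝ → X) : Prop :=
  ContinuousOn γ (Set.Icc 0 1) ∧ Set.MapsTo γ (Set.Icc 0 1) Ω ∧ γ 0 = x ∧ γ 1 = y

/-- The inner (pseudo)metric of `Ω`: the infimum of lengths of continuous curves
joining `x` to `y` inside `Ω`. -/
def innerDist {X : Type*} [PseudoEMetricSpace X] (Ω : Set X) (x y : X) : ℝ≥0∞ :=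
  ⨅ (γ : ℝ → X) (_ : IsCurveIn Ω x y γ), curveLength γ

/-- `γ : [0,1] → Ω` is a `(c,C)`-inner uniform curve in `Ω`. -/
def IsInnerUniformCurve {X : Type*} [PseudoEMetricSpace X] (c C : ℝ) (Ω : Set X)
    (γ : ℝ → X) : Prop :=
  ContinuousOn γ (Set.Icc 0 1) ∧ Set.MapsTo γ (Set.Icc 0 1) Ω ∧
    curveLength γ ≤ ENNReal.ofReal C * innerDist Ω (γ 0) (γ 1) ∧
    ∀ t ∈ Set.Icc (0:ℝ) 1,
      ENNReal.ofReal c * min (innerDist Ω (γ 0) (γ t)) (innerDist Ω (γ t) (γ 1)) ≤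
        EMetric.infEdist (γ t) Ωᶜ

/-- `Ω` is a `(c,C)`-inner uniform domain. -/
def IsInnerUniformDomain {X : Type*} [PseudoEMetricSpace X] (c C : ℝ) (Ω : Set X) : Prop :=
  IsOpen Ω ∧ IsConnected Ω ∧
    ∀ x ∈ Ω, ∀ y ∈ Ω, ∃ γ : ℝ → X, IsInnerUniformCurve c C Ω γ ∧ γ 0 = x ∧ γ 1 = y

/-!
A curve in `U` from `y` to `z` of length less than `2r` stays in the inner ball `B_U(a, 2r)`: each
of its points `x` splits it into an arc from `y` to `x` and an arc from `x` to `z`, so adding the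
triangle inequalities through `y` and through `z` gives
`2 d_U(a, x) ≤ d_U(a, y) + ℓ + d_U(a, z) < 4r`, where `ℓ < 2r` is the length of the curve. Since
`d_U(y, z) < 2r`, only such curves matter for `d_U(y, z)`, and they are all curves in `W`.
-/

theorem eVariationOn_Icc_add_Icc {α E : Type*} [LinearOrder α] [PseudoEMetricSpace E] (f : α → E)
    {u v w : α} (huv : u ≤ v) (hvw : v ≤ w) :
    eVariationOn f (Icc u v) + eVariationOn f (Icc v w) = eVariationOn f (Icc u w) := by
  simpa only [univ_inter] using eVariationOn.Icc_add_Icc f huv hvw (mem_univ v)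

section InnerDist

variable {X : Type*} [PseudoEMetricSpace X] {Ω W U : Set X} {x y z : X} {γ δ : ℝ → X}

theorem IsCurveIn.innerDist_le_curveLength (hγ : IsCurveIn Ω x y γ) :
    innerDist Ω x y ≤ curveLength γ :=
  iInf₂_le γ hγ

theorem innerDist_lt_iff {c : ℝ≥0∞} :
    innerDist Ω x y < c ↔ ∃ γ, IsCurveIn Ω x y γ ∧ curveLength γ < c := by
  simp only [innerDist, iInf_lt_iff, exists_prop]

theorem innerDist_anti (hWU : W ⊆ U) : innerDist U x y ≤ innerDist W x y :=
  biInf_mono fun _ ⟨hcont, hmaps, hends⟩ => ⟨hcont, hmaps.mono_right hWU, hends⟩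

theorem innerDist_le_eVariationOn_uIcc {u v : ℝ} (hcont : ContinuousOn γ (uIcc u v))
    (hmaps : MapsTo γ (uIcc u v) Ω) :
    innerDist Ω (γ u) (γ v) ≤ eVariationOn γ (uIcc u v) := by
  let φ : ℝ → ℝ := AffineMap.lineMap u v
  have hφ : MapsTo φ (Icc 0 1) (uIcc u v) := fun t ht =>
    segment_eq_uIcc u v ▸ lineMap_mem_segment ℝ u v ht
  have hcurve : IsCurveIn Ω (γ u) (γ v) (γ ∘ φ) :=
    ⟨hcont.comp AffineMap.lineMap_continuous.continuousOn hφ, hmaps.comp hφ,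
      by simp [φ], by simp [φ]⟩
  refine hcurve.innerDist_le_curveLength.trans ?_
  rcases le_total u v with huv | hvu
  · exact eVariationOn.comp_le_of_monotoneOn γ φ ((AffineMap.lineMap_mono huv).monotoneOn _) hφ
  · exact eVariationOn.comp_le_of_antitoneOn γ φ ((AffineMap.lineMap_anti hvu).antitoneOn _) hφ

theorem innerDist_le_eVariationOn_Icc {u v : ℝ} (huv : u ≤ v) (hcont : ContinuousOn γ (Icc u v))
    (hmaps : MapsTo γ (Icc u v) Ω) :
    innerDist Ω (γ u) (γ v) ≤ eVariationOn γ (Icc u v) := by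
  rw [← uIcc_of_le huv] at hcont hmaps ⊢
  exact innerDist_le_eVariationOn_uIcc hcont hmaps

theorem innerDist_comm (Ω : Set X) (x y : X) : innerDist Ω x y = innerDist Ω y x := by
  suffices h : ∀ x y, innerDist Ω x y ≤ innerDist Ω y x from (h x y).antisymm (h y x)
  refine fun x y => le_iInf₂ ?_
  rintro γ ⟨hcont, hmaps, rfl, rfl⟩
  rw [curveLength]
  rw [← uIcc_of_ge zero_le_one] at hcont hmaps ⊢
  exact innerDist_le_eVariationOn_uIcc hcont hmaps

theorem IsCurveIn.innerDist_add_innerDist_le_curveLength (hγ : IsCurveIn Ω x y γ) {t : ℝ}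
    (ht : t ∈ Icc (0 : ℝ) 1) :
    innerDist Ω x (γ t) + innerDist Ω (γ t) y ≤ curveLength γ := by
  obtain ⟨hcont, hmaps, rfl, rfl⟩ := hγ
  have hleft : Icc 0 t ⊆ Icc 0 1 := Icc_subset_Icc_right ht.2
  have hright : Icc t 1 ⊆ Icc 0 1 := Icc_subset_Icc_left ht.1
  calc innerDist Ω (γ 0) (γ t) + innerDist Ω (γ t) (γ 1)
      ≤ eVariationOn γ (Icc 0 t) + eVariationOn γ (Icc t 1) :=
        add_le_add
          (innerDist_le_eVariationOn_Icc ht.1 (hcont.mono hleft) (hmaps.mono_left hleft))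
          (innerDist_le_eVariationOn_Icc ht.2 (hcont.mono hright) (hmaps.mono_left hright))
    _ = curveLength γ := eVariationOn_Icc_add_Icc γ ht.1 ht.2

theorem IsCurveIn.innerDist_le_curveLength_add_curveLength (hγ : IsCurveIn Ω x y γ)
    (hδ : IsCurveIn Ω y z δ) : innerDist Ω x z ≤ curveLength γ + curveLength δ := by
  obtain ⟨hγcont, hγmaps, rfl, rfl⟩ := hγ
  obtain ⟨hδcont, hδmaps, hjoin, rfl⟩ := hδ
  let shift : ℝ → ℝ := fun t => t - 1
  let concat : ℝ → X := fun t => if t ≤ 1 then γ t else δ (shift t)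
  have hleft : EqOn concat γ (Icc 0 1) := fun t ht => if_pos ht.2
  have hright : EqOn concat (δ ∘ shift) (Icc 1 2) := by
    intro t ht
    rcases ht.1.eq_or_lt with rfl | hlt
    · simp [concat, shift, hjoin]
    · exact if_neg hlt.not_ge
  have hshift : MapsTo shift (Icc 1 2) (Icc 0 1) := fun t ht =>
    ⟨sub_nonneg.2 ht.1, by linarith [ht.2]⟩
  have hunion : Icc (0 : ℝ) 1 ∪ Icc 1 2 = Icc 0 2 :=
    Icc_union_Icc_eq_Icc zero_le_one one_le_two
  have hcont : ContinuousOn concat (Icc 0 2) := hunion ▸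
    (hγcont.congr hleft).union_of_isClosed
      ((hδcont.comp (by fun_prop) hshift).congr hright) isClosed_Icc isClosed_Icc
  have hmaps : MapsTo concat (Icc 0 2) Ω := hunion ▸
    (hγmaps.congr hleft.symm).union ((hδmaps.comp hshift).congr hright.symm)
  calc innerDist Ω (γ 0) (δ 1)
      = innerDist Ω (concat 0) (concat 2) := by norm_num [concat, shift]
    _ ≤ eVariationOn concat (Icc 0 2) :=
        innerDist_le_eVariationOn_Icc zero_le_two hcont hmaps
    _ = eVariationOn γ (Icc 0 1) + eVariationOn (δ ∘ shift) (Icc 1 2) := by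
        rw [← eVariationOn_Icc_add_Icc concat zero_le_one one_le_two,
          eVariationOn.congr hleft, eVariationOn.congr hright]
    _ ≤ curveLength γ + curveLength δ := by
        refine add_le_add le_rfl (eVariationOn.comp_le_of_monotoneOn δ shift ?_ hshift)
        exact fun _ _ _ _ hst => sub_le_sub_right hst 1

theorem innerDist_triangle (Ω : Set X) (x y z : X) :
    innerDist Ω x z ≤ innerDist Ω x y + innerDist Ω y z :=
  ENNReal.le_iInf₂_add_iInf₂ fun _ hγ _ hδ => hγ.innerDist_le_curveLength_add_curveLength hδ

theorem IsCurveIn.two_mul_innerDist_le (hγ : IsCurveIn Ω y z γ) (a : X) {t : ℝ}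
    (ht : t ∈ Icc (0 : ℝ) 1) :
    2 * innerDist Ω a (γ t) ≤ innerDist Ω a y + innerDist Ω a z + curveLength γ :=
  calc 2 * innerDist Ω a (γ t)
      = innerDist Ω a (γ t) + innerDist Ω a (γ t) := two_mul _
    _ ≤ (innerDist Ω a y + innerDist Ω y (γ t)) + (innerDist Ω a z + innerDist Ω z (γ t)) :=
        add_le_add (innerDist_triangle ..) (innerDist_triangle ..)
    _ = innerDist Ω a y + innerDist Ω a z + (innerDist Ω y (γ t) + innerDist Ω (γ t) z) := by
        rw [add_add_add_comm, innerDist_comm Ω z]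
    _ ≤ innerDist Ω a y + innerDist Ω a z + curveLength γ := by
        gcongr
        exact hγ.innerDist_add_innerDist_le_curveLength ht

theorem IsCurveIn.innerDist_lt_two_mul {a : X} {r : ℝ≥0∞} (hγ : IsCurveIn Ω y z γ)
    (hay : innerDist Ω a y < r) (haz : innerDist Ω a z < r) (hlen : curveLength γ < 2 * r)
    {t : ℝ} (ht : t ∈ Icc (0 : ℝ) 1) : innerDist Ω a (γ t) < 2 * r := by
  have h : 2 * innerDist Ω a (γ t) < 2 * (2 * r) :=
    calc 2 * innerDist Ω a (γ t)
        ≤ innerDist Ω a y + innerDist Ω a z + curveLength γ := hγ.two_mul_innerDist_le a ht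
      _ < r + r + 2 * r := ENNReal.add_lt_add (ENNReal.add_lt_add hay haz) hlen
      _ = 2 * (2 * r) := by ring
  exact lt_of_mul_lt_mul_left' h

theorem statement7_general (hWU : W ⊆ U) {a : X} {r : ℝ≥0∞}
    (hball : ∀ x ∈ U, innerDist U a x < 2 * r → x ∈ W)
    (hay : innerDist U a y < r) (haz : innerDist U a z < r) :
    innerDist W y z = innerDist U y z := by
  refine le_antisymm (le_of_forall_gt fun c hc => ?_) (innerDist_anti hWU)
  have hyz : innerDist U y z < 2 * r :=
    calc innerDist U y z
        ≤ innerDist U a y + innerDist U a z := innerDist_comm U a y ▸ innerDist_triangle U y a z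
      _ < r + r := ENNReal.add_lt_add hay haz
      _ = 2 * r := (two_mul r).symm
  obtain ⟨γ, hγ, hlen⟩ := innerDist_lt_iff.1 (lt_min hc hyz)
  obtain ⟨hlen_c, hlen_r⟩ := lt_min_iff.1 hlen
  have hγW : IsCurveIn W y z γ :=
    ⟨hγ.1, fun t ht => hball _ (hγ.2.1 ht) (hγ.innerDist_lt_two_mul hay haz hlen_r ht), hγ.2.2⟩
  exact hγW.innerDist_le_curveLength.trans_lt hlen_c

end InnerDist

/-- If the inner ball `B_U(a,3r)` is contained in the subdomain `W ⊆ U`, then the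
inner metrics `d_W` and `d_U` coincide on the inner ball `B_U(a,r)`. -/
theorem statement7 {X : Type*} [MetricSpace X] (W U : Set X)
    (hWopen : IsOpen W) (hWconn : IsConnected W)
    (hUopen : IsOpen U) (hUconn : IsConnected U) (hWU : W ⊆ U)
    (a : X) (ha : a ∈ U) (r : ℝ) (hr : 0 < r)
    (hball : ∀ x ∈ U, innerDist U a x < ENNReal.ofReal (3 * r) → x ∈ W) :
    ∀ y ∈ U, ∀ z ∈ U, innerDist U a y < ENNReal.ofReal r →
      innerDist U a z < ENNReal.ofReal r → innerDist W y z = innerDist U y z := by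
  intro y _ z _ hay haz
  refine statement7_general hWU (fun x hx hax => hball x hx (hax.trans_le ?_)) hay haz
  rw [ENNReal.ofReal_mul zero_le_three, ENNReal.ofReal_ofNat]
  gcongr
  norm_num
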